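/- arXiv:2407.20593 — 6 statements merged into one kernel-verified Lean document; each statement's English description precedes it below -/
import Mathlib

section
/- Let X₁° = X(I_k, …, I_k, s; 0) ∈ M_{2n}(ℂ), i.e., the matrix X(A_1,…,A_{m/2}; A_m) with A_r = I_k for 1 ≤ r ≤ m/2 − 1, A_{m/2} = s, and A_m = 0. Then X₁° is nilpotent with (X₁°)^m = 0, and rank((X₁°)^j) = k·(m − j) for all 0 ≤ j ≤ m; equivalently, the Jordan normal form of X₁° consists of exactly k Jordan blocks, each of size m. -/
open Matrix

/-- The `k × k` anti-diagonal matrix `s` (entries `1` on the anti-diagonal). -/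
noncomputable def adiag (k : ℕ) : Matrix (Fin k) (Fin k) ℂ :=
  Matrix.of fun i j => if (i : ℕ) + (j : ℕ) = k - 1 then 1 else 0

/-- The matrix `X(A_1, …, A_{m/2}; A_m) ∈ M_{2n}(ℂ) = M_{mk}(ℂ)`, written as an
`m × m` array of `k × k` blocks (indexed by `Fin m × Fin k`), whose only possibly
nonzero blocks are: block `(r, r+1) = A r` for `1 ≤ r ≤ m/2` (1-based),
block `(r, r+1) = −s·(A (m−r))ᵀ·s` for `m/2 + 1 ≤ r ≤ m − 1`, and
block `(m, 1) = A m`. -/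
noncomputable def spX (k m : ℕ) (A : ℕ → Matrix (Fin k) (Fin k) ℂ) :
    Matrix (Fin m × Fin k) (Fin m × Fin k) ℂ :=
  Matrix.of fun p q =>
    if (q.1 : ℕ) = (p.1 : ℕ) + 1 then
      if (p.1 : ℕ) + 1 ≤ m / 2 then A ((p.1 : ℕ) + 1) p.2 q.2
      else (-(adiag k * (A (m - ((p.1 : ℕ) + 1)))ᵀ * adiag k)) p.2 q.2
    else if (p.1 : ℕ) = m - 1 ∧ (q.1 : ℕ) = 0 then A m p.2 q.2
    else 0

/-!
Since `A_m = 0`, the matrix `X` is superdiagonal over the ring of `k × k` matrices. Its `j`-th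
power is then concentrated on the `j`-th superdiagonal, with entries the products of `j`
consecutive blocks. When the blocks are invertible, deleting the last `j` block rows, which vanish,
and the first `j` block columns leaves an invertible block diagonal matrix of size `k (m - j)`.
The blocks `-s Aᵀ s` are invertible along with the `A`, because `s² = 1`.
-/

section Rank

variable {ι ι₀ κ R : Type*} [Fintype ι₀] [DecidableEq ι₀] [CommSemiring R]
  [StrongRankCondition R]

lemma rank_eq_card_of_isUnit_submatrix [Fintype κ] (A : Matrix ι κ R) (r : ι₀ → ι) (c : ι₀ → κ)
    (hA : IsUnit (A.submatrix r c)) (hr : ∀ i ∉ Set.range r, A.row i = 0) :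
    A.rank = Fintype.card ι₀ := by
  classical
  refine le_antisymm ?_ ?_
  · have hsupp : Function.support A.row ⊆ (Finset.univ.image r : Finset ι) := fun i hi => by
      simpa using not_imp_comm.1 (hr i) hi
    exact (rank_le_card_of_support_subset A _ hsupp).trans Finset.card_image_le
  · rw [← rank_of_isUnit _ hA]
    exact rank_submatrix_le A r c

end Rank

section Superdiagonal

variable {S : Type*} [Semiring S] {m : ℕ}

/-- The `m × m` matrix whose only possibly nonzero entries are those in positions `(p, p + 1)`,
the entry there being `b p`. Indices start at `0`, and only the values `b p` with `p + 1 < m`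
matter. For `S` a ring of matrices this is a block superdiagonal matrix. -/
def superdiagonal (m : ℕ) (b : ℕ → S) : Matrix (Fin m) (Fin m) S :=
  Matrix.of fun p q => if (q : ℕ) = p + 1 then b p else 0

lemma superdiagonal_apply (b : ℕ → S) (p q : Fin m) :
    superdiagonal m b p q = if (q : ℕ) = p + 1 then b p else 0 :=
  rfl

lemma superdiagonal_pow_apply (b : ℕ → S) (j : ℕ) (p q : Fin m) :
    (superdiagonal m b ^ j) p q =
      if (q : ℕ) = p + j then ((List.range' p j).map b).prod else 0 := by
  induction j generalizing q with
  | zero => simp [one_apply, Fin.ext_iff, eq_comm]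
  | succ j ih =>
    simp only [pow_succ, mul_apply, ih, superdiagonal_apply, ite_mul, zero_mul, mul_ite, mul_zero]
    split_ifs with hq
    · have hp : (p : ℕ) + j < m := by omega
      rw [Finset.sum_eq_single_of_mem ⟨p + j, hp⟩ (Finset.mem_univ _) fun r _ hr => ?_]
      · simp [List.range'_1_concat, hq, add_assoc]
      · rw [if_neg fun h => hr (Fin.ext h), ite_self]
    · refine Finset.sum_eq_zero fun r _ => ?_
      split_ifs <;> first | rfl | omega

lemma superdiagonal_pow_self (b : ℕ → S) : superdiagonal m b ^ m = 0 := by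
  ext p q
  rw [superdiagonal_pow_apply, if_neg (by omega), Matrix.zero_apply]

lemma superdiagonal_pow_row_eq_zero (b : ℕ → S) {j : ℕ} {p : Fin m} (hp : m ≤ p + j) :
    (superdiagonal m b ^ j).row p = 0 := by
  ext q
  rw [row_apply, superdiagonal_pow_apply, if_neg (by omega), Pi.zero_apply]

lemma superdiagonal_pow_submatrix (b : ℕ → S) (j : ℕ) :
    (superdiagonal m b ^ j).submatrix (Fin.castLE (m.sub_le j))
        (fun i : Fin (m - j) => ⟨i + j, by omega⟩) =
      diagonal fun i : Fin (m - j) => ((List.range' i j).map b).prod := by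
  ext p q
  simp [superdiagonal_pow_apply, diagonal_apply, Fin.ext_iff, eq_comm]

lemma isUnit_superdiagonal_pow_submatrix {b : ℕ → S} (hb : ∀ p, p + 1 < m → IsUnit (b p))
    (j : ℕ) :
    IsUnit ((superdiagonal m b ^ j).submatrix (Fin.castLE (m.sub_le j))
      (fun i : Fin (m - j) => ⟨i + j, by omega⟩)) := by
  rw [superdiagonal_pow_submatrix]
  have hprod : IsUnit fun i : Fin (m - j) => ((List.range' i j).map b).prod := by
    refine Pi.isUnit_iff.2 fun i => List.prod_isUnit fun x hx => ?_
    obtain ⟨p, hp, rfl⟩ := List.mem_map.1 hx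
    rw [List.mem_range'_1] at hp
    exact hb p (by omega)
  exact hprod.map (diagonalRingHom (Fin (m - j)) S)

lemma rank_comp_superdiagonal_pow {κ R : Type*} [Fintype κ] [DecidableEq κ] [CommSemiring R]
    [StrongRankCondition R] {b : ℕ → Matrix κ κ R} (hb : ∀ p, p + 1 < m → IsUnit (b p)) (j : ℕ) :
    (comp _ _ _ _ R (superdiagonal m b ^ j)).rank = Fintype.card κ * (m - j) := by
  have hunit : IsUnit ((comp _ _ _ _ R (superdiagonal m b ^ j)).submatrix
      (Prod.map (Fin.castLE (m.sub_le j)) id)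
      (Prod.map (fun i : Fin (m - j) => ⟨i + j, by omega⟩) id)) :=
    (isUnit_comp_iff _ _ _).2 (isUnit_superdiagonal_pow_submatrix hb j)
  rw [rank_eq_card_of_isUnit_submatrix _ _ _ hunit, Fintype.card_prod, Fintype.card_fin, mul_comm]
  rintro ⟨p, x⟩ hp
  have hpj : m ≤ p + j := by
    by_contra! h
    exact hp ⟨(⟨p, by omega⟩, x), rfl⟩
  ext ⟨q, y⟩
  exact congr_fun₂ (congr_fun (superdiagonal_pow_row_eq_zero b hpj) q) x y

end Superdiagonal

section Symplectic

variable {k m : ℕ} {A : ℕ → Matrix (Fin k) (Fin k) ℂ}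

lemma adiag_mul_self (k : ℕ) : adiag k * adiag k = 1 := by
  have hperm : adiag k = (Fin.revPerm (n := k)).permMatrix ℂ := by
    ext i j
    simp only [adiag, of_apply, Equiv.Perm.permMatrix, PEquiv.toMatrix_apply,
      Equiv.toPEquiv_apply, Fin.revPerm_apply, Option.mem_some_iff, Fin.ext_iff, Fin.val_rev]
    exact if_congr (by omega) rfl rfl
  have hrev : Fin.revPerm (n := k) * Fin.revPerm = 1 := Equiv.ext Fin.rev_rev
  rw [hperm, ← permMatrix_mul, hrev, permMatrix_one]

lemma isUnit_adiag (k : ℕ) : IsUnit (adiag k) :=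
  .of_mul_eq_one _ (adiag_mul_self k)

/-- The block of `spX k m A` in position `(p, p + 1)` of the array, with `p` counted
from `0` (unlike the indices of `A`), when `p + 1 < m`. -/
noncomputable def spXBlock (m : ℕ) (A : ℕ → Matrix (Fin k) (Fin k) ℂ) (p : ℕ) :
    Matrix (Fin k) (Fin k) ℂ :=
  if p + 1 ≤ m / 2 then A (p + 1) else -(adiag k * (A (m - (p + 1)))ᵀ * adiag k)

lemma spX_eq_comp_superdiagonal (hAm : A m = 0) :
    spX k m A = comp _ _ _ _ ℂ (superdiagonal m (spXBlock m A)) := by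
  ext ⟨p, i⟩ ⟨q, j⟩
  simp only [spX, hAm, superdiagonal, spXBlock, of_apply, comp_apply, Matrix.zero_apply, ite_self]
  split_ifs <;> rfl

lemma isUnit_spXBlock (hA : ∀ r, 1 ≤ r → r ≤ m / 2 → IsUnit (A r)) {p : ℕ} (hp : p + 1 < m) :
    IsUnit (spXBlock m A p) := by
  rw [spXBlock]
  split_ifs with h
  · exact hA _ (by omega) h
  · have hr : IsUnit (A (m - (p + 1))) := hA _ (by omega) (by omega)
    exact (((isUnit_adiag k).mul ((isUnit_transpose _).2 hr)).mul (isUnit_adiag k)).neg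

theorem stmt2_general (k m : ℕ) (A : ℕ → Matrix (Fin k) (Fin k) ℂ)
    (hA : ∀ r, 1 ≤ r → r ≤ m / 2 → IsUnit (A r)) (hAm : A m = 0) :
    spX k m A ^ m = 0 ∧ ∀ j ≤ m, (spX k m A ^ j).rank = k * (m - j) := by
  have hpow (j : ℕ) :
      spX k m A ^ j = comp _ _ _ _ ℂ (superdiagonal m (spXBlock m A) ^ j) := by
    rw [spX_eq_comp_superdiagonal hAm]
    exact (map_pow (compRingEquiv (Fin m) (Fin k) ℂ) _ j).symm
  refine ⟨?_, fun j _ => ?_⟩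
  · rw [hpow, superdiagonal_pow_self]
    rfl
  · rw [hpow, rank_comp_superdiagonal_pow fun p => isUnit_spXBlock hA, Fintype.card_fin]

end Symplectic

/-- Let `X₁° = X(I_k, …, I_k, s; 0)`, i.e. `X(A_1,…,A_{m/2}; A_m)` with
`A_r = I_k` for `1 ≤ r ≤ m/2 − 1`, `A_{m/2} = s` and `A_m = 0`. Then
`(X₁°)^m = 0` and `rank((X₁°)^j) = k·(m − j)` for all `0 ≤ j ≤ m`; i.e. the
Jordan form of `X₁°` consists of exactly `k` Jordan blocks each of size `m`. -/
theorem stmt2 (n k m : ℕ) (hn : 0 < n) (hk : 1 < k) (hkn : k ∣ n)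
    (hm : m = 2 * n / k)
    (X : Matrix (Fin m × Fin k) (Fin m × Fin k) ℂ)
    (hX : X = spX k m (fun r => if r = m / 2 then adiag k
      else if r = m then 0 else 1)) :
    X ^ m = 0 ∧ ∀ j ≤ m, (X ^ j).rank = k * (m - j) := by
  subst hX
  have hkn' : k ≤ 2 * n := (Nat.le_of_dvd hn hkn).trans (by omega)
  have hpos : 0 < m := hm ▸ Nat.div_pos hkn' (by omega)
  refine stmt2_general k m _ (fun r _ hr => ?_) (by rw [if_neg (by omega), if_pos rfl])
  rw [if_neg (show r ≠ m by omega)]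
  split_ifs
  exacts [isUnit_adiag k, isUnit_one]
end

section
/- Suppose the characteristic polynomial of X = X(A_1,…,A_{m/2}; A_m) ∈ M_{2n}(ℂ) has 2n distinct roots, all nonzero (i.e., X is a regular semisimple, equivalently stable, element of the degree-one piece of the stable grading of order m on sp_{2n}(ℂ)). Then the matrix X₁ = X(A_1,…,A_{m/2}; 0) is nilpotent with X₁^m = 0 and rank(X₁^j) = k·(m − j) for all 0 ≤ j ≤ m; that is, the Jordan type of X₁ consists of k Jordan blocks each of size m (so exp(X₁) lies in the Richardson unipotent class u_P of Sp_{2n} attached to the parahoric P of the order-m stable grading). -/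
open Matrix

/-!
Let `X = X(A₁, …; Aₘ)` and `Y = X(A₁, …; 0)`. Grading the index set by the block number makes `Y`
homogeneous of degree one, so `Y ^ m = 0` because there are only `m` degrees. As `X` is invertible
and `X - Y` is supported on a single block row, `rank (Y ^ j) = rank (Y ^ j * X)` exceeds
`rank (Y ^ (j + 1))` by at most `k`. The ranks fall from `k * m` to `0` in `m` such steps, so every
step must be exactly `k`.
-/

theorem le_add_mul_of_le_succ_add {f : ℕ → ℕ} {k : ℕ} (hf : ∀ j, f j ≤ f (j + 1) + k) (i d : ℕ) :
    f i ≤ f (i + d) + k * d := by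
  induction d with
  | zero => simp
  | succ d ih =>
    calc f i ≤ f (i + d) + k * d := ih
      _ ≤ f (i + d + 1) + k + k * d := by gcongr; exact hf (i + d)
      _ = f (i + (d + 1)) + k * (d + 1) := by ring_nf

theorem eq_mul_sub_of_le_succ_add {f : ℕ → ℕ} {k m : ℕ} (hf : ∀ j, f j ≤ f (j + 1) + k)
    (h0 : k * m ≤ f 0) (hm : f m = 0) {j : ℕ} (hj : j ≤ m) : f j = k * (m - j) := by
  obtain ⟨d, rfl⟩ := Nat.exists_eq_add_of_le hj
  have upper : f j ≤ f (j + d) + k * d := le_add_mul_of_le_succ_add hf j d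
  have lower : f 0 ≤ f j + k * j := by simpa using le_add_mul_of_le_succ_add hf 0 j
  rw [Nat.add_sub_cancel_left]
  linarith

section Rank

variable {K ι κ : Type*} [Field K] [Fintype ι]

theorem rank_add_le (A B : Matrix κ ι K) : (A + B).rank ≤ A.rank + B.rank := by
  unfold Matrix.rank
  rw [mulVecLin_add]
  exact (Submodule.finrank_mono (LinearMap.range_add_le _ _)).trans
    (Submodule.finrank_add_le_finrank_add_finrank _ _)

variable [DecidableEq ι] {X : Matrix ι ι K}

theorem isUnit_iff_zero_notMem_roots_charpoly : IsUnit X ↔ 0 ∉ X.charpoly.roots := by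
  rw [← spectrum.zero_notMem_iff K, mem_spectrum_iff_isRoot_charpoly,
    Polynomial.mem_roots X.charpoly_monic.ne_zero]

theorem rank_le_rank_mul_add_rank_sub (hX : IsUnit X) (Y : Matrix ι ι K) (M : Matrix κ ι K) :
    M.rank ≤ (M * Y).rank + (X - Y).rank :=
  calc M.rank = (M * X).rank :=
        (rank_mul_eq_left_of_isUnit_det X M ((isUnit_iff_isUnit_det X).mp hX)).symm
    _ = (M * Y + M * (X - Y)).rank := by rw [← Matrix.mul_add, add_sub_cancel]
    _ ≤ (M * Y).rank + (M * (X - Y)).rank := rank_add_le _ _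
    _ ≤ (M * Y).rank + (X - Y).rank := by gcongr; exact rank_mul_le_right _ _

theorem rank_pow_eq_of_rank_sub_le {Y : Matrix ι ι K} {k m : ℕ} (hX : IsUnit X)
    (hXY : (X - Y).rank ≤ k) (hY : Y ^ m = 0) (hcard : k * m ≤ Fintype.card ι) {j : ℕ}
    (hj : j ≤ m) : (Y ^ j).rank = k * (m - j) := by
  have drop (i : ℕ) : (Y ^ i).rank ≤ (Y ^ (i + 1)).rank + k := by
    rw [pow_succ]
    exact (rank_le_rank_mul_add_rank_sub hX Y (Y ^ i)).trans (by gcongr)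
  exact eq_mul_sub_of_le_succ_add drop (by simpa using hcard) (by simp [hY]) hj

end Rank

/-- A square matrix is homogeneous of degree `d` for the grading `deg` of its index set if each of
its nonzero entries `(p, q)` raises the degree by `d`, from `deg p` to `deg q`. It serves to track
which blocks of a power of a block matrix can be nonzero. -/
def IsHomogeneousMatrix {ι M R : Type*} [Add M] [Zero R] (deg : ι → M) (d : M)
    (Y : Matrix ι ι R) : Prop :=
  ∀ ⦃p q⦄, Y p q ≠ 0 → deg q = deg p + d

namespace IsHomogeneousMatrix

variable {ι M R : Type*} [AddMonoid M] [Semiring R] {deg : ι → M} {d e : M} {X Y : Matrix ι ι R}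

theorem one [DecidableEq ι] : IsHomogeneousMatrix deg 0 (1 : Matrix ι ι R) := by
  intro p q hpq
  obtain rfl : p = q := by_contra fun h => hpq (one_apply_ne h)
  exact (add_zero _).symm

variable [Fintype ι]

theorem mul (hX : IsHomogeneousMatrix deg d X) (hY : IsHomogeneousMatrix deg e Y) :
    IsHomogeneousMatrix deg (d + e) (X * Y) := by
  intro p q hpq
  obtain ⟨r, -, hr⟩ := Finset.exists_ne_zero_of_sum_ne_zero (mul_apply (M := X) (N := Y) ▸ hpq)
  rw [hY (right_ne_zero_of_mul hr), hX (left_ne_zero_of_mul hr), add_assoc]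

variable [DecidableEq ι]

theorem pow (hY : IsHomogeneousMatrix deg d Y) (j : ℕ) :
    IsHomogeneousMatrix deg (j • d) (Y ^ j) := by
  induction j with
  | zero => simpa only [zero_smul, pow_zero] using one
  | succ j ih => simpa only [succ_nsmul, pow_succ] using ih.mul hY

theorem pow_eq_zero {deg : ι → ℕ} {m : ℕ} (hY : IsHomogeneousMatrix deg 1 Y)
    (hdeg : ∀ p, deg p < m) : Y ^ m = 0 := by
  ext p q
  by_contra hpq
  have hq : deg q = deg p + m • 1 := hY.pow m hpq
  have := hdeg q
  rw [smul_eq_mul, mul_one] at hq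
  omega

end IsHomogeneousMatrix

section SpX

variable (k m : ℕ) (A : ℕ → Matrix (Fin k) (Fin k) ℂ)

theorem isHomogeneousMatrix_spX_update_zero :
    IsHomogeneousMatrix (fun p => (p.1 : ℕ)) 1 (spX k m (Function.update A m 0)) := by
  intro p q hpq
  by_contra hdeg
  exact hpq (by simp [spX, hdeg])

theorem spX_update_apply_of_ne (C : Matrix (Fin k) (Fin k) ℂ) {p : Fin m × Fin k}
    (hp : (p.1 : ℕ) ≠ m - 1) (q : Fin m × Fin k) :
    spX k m (Function.update A m C) p q = spX k m A p q := by
  have hpm := p.1.isLt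
  have hsucc : (p.1 : ℕ) + 1 ≠ m := by omega
  have hsub : m - ((p.1 : ℕ) + 1) ≠ m := by omega
  simp only [spX, of_apply, Function.update_of_ne hsucc, Function.update_of_ne hsub, hp, false_and,
    if_false]

theorem rank_spX_sub_spX_update_le (C : Matrix (Fin k) (Fin k) ℂ) :
    (spX k m A - spX k m (Function.update A m C)).rank ≤ k := by
  let lastRows : Finset (Fin m × Fin k) := {p | (p.1 : ℕ) = m - 1}
  have support : Function.support (spX k m A - spX k m (Function.update A m C)).row ⊆ lastRows := by
    rw [Function.support_subset_iff']
    intro p hp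
    have hlast : (p.1 : ℕ) ≠ m - 1 := by simpa [lastRows] using hp
    ext q
    exact sub_eq_zero.mpr (spX_update_apply_of_ne k m A C hlast q).symm
  have snd_injOn : Set.InjOn Prod.snd (lastRows : Set (Fin m × Fin k)) := by
    intro p hp q hq hpq
    have hp : (p.1 : ℕ) = m - 1 := by simpa [lastRows] using hp
    have hq : (q.1 : ℕ) = m - 1 := by simpa [lastRows] using hq
    exact Prod.ext (Fin.ext (hp.trans hq.symm)) hpq
  calc (spX k m A - spX k m (Function.update A m C)).rank ≤ lastRows.card :=
        rank_le_card_of_support_subset _ _ support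
    _ ≤ (Finset.univ : Finset (Fin k)).card :=
        Finset.card_le_card_of_injOn Prod.snd (fun _ _ => Finset.mem_coe.mpr (Finset.mem_univ _))
          snd_injOn
    _ = k := Finset.card_fin k

theorem stmt3_general (hX : IsUnit (spX k m A)) :
    spX k m (Function.update A m 0) ^ m = 0 ∧
      ∀ j ≤ m, (spX k m (Function.update A m 0) ^ j).rank = k * (m - j) := by
  have nilpotent : spX k m (Function.update A m 0) ^ m = 0 :=
    (isHomogeneousMatrix_spX_update_zero k m A).pow_eq_zero fun p => p.1.isLt
  have hcard : k * m ≤ Fintype.card (Fin m × Fin k) := by simp [mul_comm]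
  exact ⟨nilpotent, fun _ =>
    rank_pow_eq_of_rank_sub_le hX (rank_spX_sub_spX_update_le k m A 0) nilpotent hcard⟩

end SpX

/-- Suppose the characteristic polynomial of `X = X(A_1,…,A_{m/2}; A_m)` has
`2n` distinct roots, all nonzero (i.e. `X` is a regular semisimple, equivalently
stable, element of the degree-one piece of the order `m` stable grading on
`sp_{2n}(ℂ)`). Then `X₁ = X(A_1,…,A_{m/2}; 0)` satisfies `X₁^m = 0` and
`rank(X₁^j) = k·(m − j)` for `0 ≤ j ≤ m`; i.e. the Jordan type of `X₁` is `k`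
blocks of size `m`, so `exp(X₁)` lies in the Richardson class `u_P`. -/
theorem stmt3 (n k m : ℕ) (hn : 0 < n) (hk : 1 < k) (hkn : k ∣ n)
    (hm : m = 2 * n / k)
    (A : ℕ → Matrix (Fin k) (Fin k) ℂ)
    (hmid : adiag k * (A (m / 2))ᵀ * adiag k = A (m / 2))
    (hcorner : adiag k * (A m)ᵀ * adiag k = A m)
    (hdistinct : (spX k m A).charpoly.roots.Nodup)
    (hcard : (spX k m A).charpoly.roots.card = 2 * n)
    (hnonzero : (0 : ℂ) ∉ (spX k m A).charpoly.roots) :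
    spX k m (Function.update A m 0) ^ m = 0 ∧
      ∀ j ≤ m, (spX k m (Function.update A m 0) ^ j).rank = k * (m - j) := by
  exact stmt3_general k m A (isUnit_iff_zero_notMem_roots_charpoly.mpr hnonzero)
end

section
/- Let X₁° = X((1 1), I₂, …, I₂, I_{2×3}; 0) ∈ M_{2n+1}(ℂ), i.e., the matrix X(A_1,…,A_{m/2}; A_{m+1}) with A_1 = (1 1), A_i = I₂ for 2 ≤ i ≤ m/2 − 1, A_{m/2} = I_{2×3}, and A_{m+1} = 0. Then X₁° is nilpotent with (X₁°)^{n+1} = 0, and rank((X₁°)^j) = max(1−j, 0) + max(n−1−j, 0) + max(n+1−j, 0) for all j ≥ 0; equivalently, the Jordan normal form of X₁° consists of one Jordan block of size 1, one of size n−1, and one of size n+1. -/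
open Matrix

/-- Read off the `(p, q)` entry (0-based, natural-number indices) of a matrix,
returning `0` out of range. -/
noncomputable def fnOf {a b : ℕ} (B : Matrix (Fin a) (Fin b) ℂ) (p q : ℕ) : ℂ :=
  if h : p < a ∧ q < b then B ⟨p, h.1⟩ ⟨q, h.2⟩ else 0

/-- The `(i, j)` entry (0-based) of the matrix `X(A_1,…,A_{m/2}; A_{m+1}) ∈
M_{2n+1}(ℂ)` for the stable grading of order `m = n` on `so_{2n+1}(ℂ)`.
The block decomposition has row/column sizes `(1, 2, …, 2, 3, 2, …, 2, 1)`
(`m + 1` diagonal blocks), and the only possibly nonzero blocks are the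
superdiagonal blocks `A_1, A_2, …, A_{m/2}, −s·A_{m/2}ᵀ·s, …, −s·A_1ᵀ·s`,
the block `A_{m+1}` in block position `(m, 1)`, and the block
`−s·A_{m+1}ᵀ·s` in block position `(m+1, 2)` (1-based block positions).
Here `A1 = A_1` (1×2), `A i = A_i` for `2 ≤ i ≤ m/2 − 1` (2×2),
`Amid = A_{m/2}` (2×3) and `Alast = A_{m+1}` (2×1). -/
noncomputable def soEnt (n : ℕ) (A1 : Matrix (Fin 1) (Fin 2) ℂ)
    (A : ℕ → Matrix (Fin 2) (Fin 2) ℂ)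
    (Amid : Matrix (Fin 2) (Fin 3) ℂ) (Alast : Matrix (Fin 2) (Fin 1) ℂ)
    (i j : ℕ) : ℂ :=
  -- block (1,2): A_1
  if i = 0 ∧ 1 ≤ j ∧ j ≤ 2 then fnOf A1 0 (j - 1)
  -- blocks (r, r+1) for 2 ≤ r ≤ m/2 − 1 (1-based): A_r
  else if 1 ≤ i ∧ i ≤ n - 4 ∧ 2 * ((i + 1) / 2) + 1 ≤ j ∧ j ≤ 2 * ((i + 1) / 2) + 2 then
    fnOf (A ((i + 1) / 2 + 1)) (i + 1 - 2 * ((i + 1) / 2)) (j - (2 * ((i + 1) / 2) + 1))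
  -- block (m/2, m/2+1): A_{m/2}
  else if n - 3 ≤ i ∧ i ≤ n - 2 ∧ n - 1 ≤ j ∧ j ≤ n + 1 then
    fnOf Amid (i - (n - 3)) (j - (n - 1))
  -- block (m/2+1, m/2+2): −s·A_{m/2}ᵀ·s
  else if n - 1 ≤ i ∧ i ≤ n + 1 ∧ n + 2 ≤ j ∧ j ≤ n + 3 then
    -(fnOf Amid (n + 3 - j) (n + 1 - i))
  -- blocks (r, r+1) for m/2+2 ≤ r ≤ m−1 (1-based): −s·A_{m+1−r}ᵀ·s
  else if n + 2 ≤ i ∧ i ≤ 2 * n - 3 ∧ 2 * (i / 2) + 2 ≤ j ∧ j ≤ 2 * (i / 2) + 3 then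
    -(fnOf (A (n - i / 2)) (2 * (i / 2) + 3 - j) (2 * (i / 2) + 1 - i))
  -- block (m, m+1): −s·A_1ᵀ·s
  else if 2 * n - 2 ≤ i ∧ i ≤ 2 * n - 1 ∧ j = 2 * n then
    -(fnOf A1 0 (2 * n - 1 - i))
  -- block (m, 1): A_{m+1}
  else if 2 * n - 2 ≤ i ∧ i ≤ 2 * n - 1 ∧ j = 0 then
    fnOf Alast (i - (2 * n - 2)) 0
  -- block (m+1, 2): −s·A_{m+1}ᵀ·s
  else if i = 2 * n ∧ 1 ≤ j ∧ j ≤ 2 then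
    -(fnOf Alast (2 - j) 0)
  else 0

/-- The matrix `X(A_1,…,A_{m/2}; A_{m+1}) ∈ M_{2n+1}(ℂ)` (with `m = n` even). -/
noncomputable def soMat (n : ℕ) (A1 : Matrix (Fin 1) (Fin 2) ℂ)
    (A : ℕ → Matrix (Fin 2) (Fin 2) ℂ)
    (Amid : Matrix (Fin 2) (Fin 3) ℂ) (Alast : Matrix (Fin 2) (Fin 1) ℂ) :
    Matrix (Fin (2 * n + 1)) (Fin (2 * n + 1)) ℂ :=
  Matrix.of fun i j => soEnt n A1 A Amid Alast (i : ℕ) (j : ℕ)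

/-
The rows of `X₁°` act on the row vectors `e_0, …, e_{2n}` by `e_0 ↦ e_1 + e_2`, `e_n ↦ 0` and, up
to sign, along the two chains `1 → 3 → ⋯ → n - 1 → n + 2 → n + 4 → ⋯ → 2n` and
`2 → 4 → ⋯ → n - 2 → n + 1 → n + 3 → ⋯ → 2n - 1 → 2n` of equal length, with the same sign at each
step, both ending in the kernel vector `e_{2n}`. Hence `e_0`, `e_1 - e_2` and `e_n` are killed by
the powers `n + 1`, `n - 1` and `1`. Since `2` is invertible they generate the whole space under
`X₁°`, and since these exponents add up to the dimension `2n + 1`, they are the Jordan block sizes.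
-/

section JordanFamily

variable {K V ι : Type*} [DivisionRing K] [AddCommGroup V] [Module K V]

/-- The vectors `f ^ a (x k)` with `a < l k`: if these form a basis and `f ^ l k (x k) = 0`, they
are a Jordan basis of `f` with block sizes `l k`. -/
def jordanFamily (f : Module.End K V) (l : ι → ℕ) (x : ι → V) (p : Σ k, Fin (l k)) : V :=
  (f ^ (p.2 : ℕ)) (x p.1)

variable {f : Module.End K V} {l : ι → ℕ} {x : ι → V}

theorem pow_apply_mem_span_jordanFamily (hx : ∀ k, (f ^ l k) (x k) = 0) (k : ι) (a : ℕ) :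
    (f ^ a) (x k) ∈ Submodule.span K (Set.range (jordanFamily f l x)) := by
  rcases lt_or_ge a (l k) with h | h
  · exact Submodule.subset_span ⟨⟨k, a, h⟩, rfl⟩
  · rw [Module.End.pow_map_zero_of_le h (hx k)]
    exact Submodule.zero_mem _

theorem span_jordanFamily_mem_invtSubmodule (hx : ∀ k, (f ^ l k) (x k) = 0) :
    Submodule.span K (Set.range (jordanFamily f l x)) ∈ f.invtSubmodule := by
  rw [Module.End.mem_invtSubmodule, Submodule.span_le]
  rintro _ ⟨⟨k, a⟩, rfl⟩
  have h := pow_apply_mem_span_jordanFamily hx k (a + 1)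
  rwa [pow_succ', Module.End.mul_apply] at h

theorem range_pow_eq_span_jordanFamily (hx : ∀ k, (f ^ l k) (x k) = 0)
    (hspan : Submodule.span K (Set.range (jordanFamily f l x)) = ⊤) (j : ℕ) :
    LinearMap.range (f ^ j) =
      Submodule.span K (Set.range (jordanFamily f (l · - j) fun k ↦ (f ^ j) (x k))) := by
  have hx' : ∀ k, (f ^ (l k - j)) ((f ^ j) (x k)) = 0 := fun k ↦ by
    rw [← Module.End.mul_apply, ← pow_add]
    exact Module.End.pow_map_zero_of_le le_tsub_add (hx k)
  apply le_antisymm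
  · rw [LinearMap.range_eq_map, ← hspan, Submodule.map_span, Submodule.span_le]
    rintro _ ⟨_, ⟨⟨k, a⟩, rfl⟩, rfl⟩
    have h := pow_apply_mem_span_jordanFamily hx' k a
    rwa [← Module.End.mul_apply, pow_mul_comm, Module.End.mul_apply] at h
  · rw [Submodule.span_le]
    rintro _ ⟨⟨k, a⟩, rfl⟩
    refine ⟨(f ^ (a : ℕ)) (x k), ?_⟩
    rw [← Module.End.mul_apply, pow_mul_comm, Module.End.mul_apply]
    rfl

theorem linearIndependent_jordanFamily_pow (h : LinearIndependent K (jordanFamily f l x)) (j : ℕ) :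
    LinearIndependent K (jordanFamily f (l · - j) fun k ↦ (f ^ j) (x k)) := by
  let shift : (Σ k, Fin (l k - j)) → Σ k, Fin (l k) :=
    Sigma.map id fun _ a ↦ ⟨a + j, Nat.add_lt_of_lt_sub a.2⟩
  have hshift : Function.Injective shift :=
    Function.injective_id.sigma_map fun k a b hab ↦ by
      simpa only [Fin.mk.injEq, add_left_inj, ← Fin.ext_iff] using hab
  convert h.comp shift hshift using 1
  ext ⟨k, a⟩
  simp only [jordanFamily, shift, Function.comp_apply, Sigma.map, id, pow_add,
    Module.End.mul_apply]

theorem finrank_range_pow_of_generators [Fintype ι] [FiniteDimensional K V]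
    (hx : ∀ k, (f ^ l k) (x k) = 0) (hl : ∑ k, l k = Module.finrank K V)
    (hgen : ∀ W ∈ f.invtSubmodule, (∀ k, x k ∈ W) → W = ⊤) (j : ℕ) :
    Module.finrank K (LinearMap.range (f ^ j)) = ∑ k, (l k - j) := by
  have hspan : Submodule.span K (Set.range (jordanFamily f l x)) = ⊤ :=
    hgen _ (span_jordanFamily_mem_invtSubmodule hx) fun k ↦ pow_apply_mem_span_jordanFamily hx k 0
  have hli : LinearIndependent K (jordanFamily f l x) :=
    linearIndependent_of_top_le_span_of_card_eq_finrank hspan.ge (by simp [hl])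
  rw [range_pow_eq_span_jordanFamily hx hspan,
    finrank_span_eq_card (linearIndependent_jordanFamily_pow hli j)]
  simp

end JordanFamily

theorem pow_apply_of_forall_apply_eq_smul_succ {K V : Type*} [CommSemiring K] [AddCommMonoid V]
    [Module K V] {f : Module.End K V} {N : ℕ} {c : ℕ → K} {u : ℕ → V}
    (hu : ∀ k < N, f (u k) = c k • u (k + 1)) {k : ℕ} (hk : k ≤ N) :
    (f ^ k) (u 0) = (∏ i ∈ Finset.range k, c i) • u k := by
  induction k with
  | zero => simp
  | succ k ih =>
    rw [pow_succ', Module.End.mul_apply, ih (by omega), map_smul, hu k hk, smul_smul,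
      Finset.prod_range_succ]

theorem mem_of_forall_apply_eq_smul_succ {K V : Type*} [DivisionRing K] [AddCommGroup V]
    [Module K V] {f : Module.End K V} {N : ℕ} {c : ℕ → K} {u : ℕ → V} (hc : ∀ k < N, c k ≠ 0)
    (hu : ∀ k < N, f (u k) = c k • u (k + 1)) {W : Submodule K V} (hW : W ∈ f.invtSubmodule)
    (h0 : u 0 ∈ W) {k : ℕ} (hk : k ≤ N) : u k ∈ W := by
  induction k with
  | zero => exact h0
  | succ k ih =>
    have h : f (u k) ∈ W := hW (ih (by omega))
    rwa [hu k hk, W.smul_mem_iff (hc k hk)] at h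

section Diamond

variable {K V : Type*} [Field K] [AddCommGroup V] [Module K V]
  {f : Module.End K V} {N : ℕ} {c : ℕ → K} {t : V} {u v : ℕ → V}

/-- A source `t` which `f` maps to the sum of the starting points of two chains `u 0, …, u N` and
`v 0, …, v N`. Along both of them `f` shifts with the same nonzero scalars `c k`, and they end in
the same vector of the kernel of `f`. The values of `u`, `v` beyond `N` are irrelevant. -/
structure IsDiamond (f : Module.End K V) (N : ℕ) (c : ℕ → K) (t : V) (u v : ℕ → V) : Prop where
  map_source : f t = u 0 + v 0
  map_left : ∀ k < N, f (u k) = c k • u (k + 1)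
  map_right : ∀ k < N, f (v k) = c k • v (k + 1)
  scalar_ne_zero : ∀ k < N, c k ≠ 0
  left_eq_right : u N = v N
  map_sink : f (u N) = 0

namespace IsDiamond

theorem pow_sub_eq_zero (h : IsDiamond f N c t u v) : (f ^ N) (u 0 - v 0) = 0 := by
  rw [map_sub, pow_apply_of_forall_apply_eq_smul_succ h.map_left le_rfl,
    pow_apply_of_forall_apply_eq_smul_succ h.map_right le_rfl, h.left_eq_right, sub_self]

theorem pow_source_eq_zero (h : IsDiamond f N c t u v) : (f ^ (N + 2)) t = 0 := by
  have hu : (f ^ (N + 1)) (u 0) = 0 := by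
    rw [pow_succ', Module.End.mul_apply, pow_apply_of_forall_apply_eq_smul_succ h.map_left le_rfl,
      map_smul, h.map_sink, smul_zero]
  have hv : (f ^ (N + 1)) (u 0 - v 0) = 0 :=
    Module.End.pow_map_zero_of_le N.le_succ h.pow_sub_eq_zero
  rw [pow_succ, Module.End.mul_apply, h.map_source, map_add, hu, zero_add]
  rwa [map_sub, hu, zero_sub, neg_eq_zero] at hv

theorem left_mem_and_right_mem [NeZero (2 : K)] (h : IsDiamond f N c t u v) {W : Submodule K V}
    (hW : W ∈ f.invtSubmodule) (ht : t ∈ W) (hsub : u 0 - v 0 ∈ W) {k : ℕ} (hk : k ≤ N) :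
    u k ∈ W ∧ v k ∈ W := by
  have hadd : u 0 + v 0 ∈ W := h.map_source ▸ hW ht
  have hu : u 0 ∈ W := by
    rw [← W.smul_mem_iff (two_ne_zero (α := K)),
      show (2 : K) • u 0 = u 0 + v 0 + (u 0 - v 0) by module]
    exact W.add_mem hadd hsub
  have hv : v 0 ∈ W := (W.add_mem_iff_right hu).mp hadd
  exact ⟨mem_of_forall_apply_eq_smul_succ h.scalar_ne_zero h.map_left hW hu hk,
    mem_of_forall_apply_eq_smul_succ h.scalar_ne_zero h.map_right hW hv hk⟩

theorem finrank_range_pow [NeZero (2 : K)] [FiniteDimensional K V] (h : IsDiamond f N c t u v)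
    {z : V} (hz : f z = 0) (hdim : Module.finrank K V = 2 * N + 3)
    (hspan : Submodule.span K ({t, z} ∪ u '' Set.Iic N ∪ v '' Set.Iic N) = ⊤) (j : ℕ) :
    Module.finrank K (LinearMap.range (f ^ j)) = (1 - j) + (N - j) + (N + 2 - j) := by
  have hx : ∀ k, (f ^ ![1, N, N + 2] k) (![z, u 0 - v 0, t] k) = 0 := by
    simpa [Fin.forall_fin_succ, -map_sub, hz] using ⟨h.pow_sub_eq_zero, h.pow_source_eq_zero⟩
  have hl : ∑ k, ![1, N, N + 2] k = Module.finrank K V := by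
    simp only [Fin.sum_univ_three, hdim, Matrix.cons_val]
    ring
  have hgen : ∀ W ∈ f.invtSubmodule, (∀ k, ![z, u 0 - v 0, t] k ∈ W) → W = ⊤ := by
    intro W hW hmem
    have hchains {k : ℕ} (hk : k ≤ N) := h.left_mem_and_right_mem hW (hmem 2) (hmem 1) hk
    rw [eq_top_iff, ← hspan, Submodule.span_le]
    rintro _ (((rfl | rfl) | ⟨k, hk, rfl⟩) | ⟨k, hk, rfl⟩)
    exacts [hmem 2, hmem 0, (hchains hk).1, (hchains hk).2]
  simpa [Fin.sum_univ_three] using finrank_range_pow_of_generators hx hl hgen j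

end IsDiamond

end Diamond

section NatSingle

variable (R : Type*) [CommSemiring R]

/-- The standard basis vectors of `Fin N → R`, indexed by natural numbers so that index arithmetic
needs no bound proofs; the value is `0` if `N ≤ i`. -/
def natSingle (N i : ℕ) : Fin N → R := fun j ↦ if (j : ℕ) = i then 1 else 0

variable {R}

theorem natSingle_val {N : ℕ} (i : Fin N) : natSingle R N i = Pi.single i 1 := by
  ext j
  simp [natSingle, Pi.single_apply, Fin.ext_iff]

theorem span_natSingle (N : ℕ) : Submodule.span R (natSingle R N '' Set.Iio N) = ⊤ := by
  rw [eq_top_iff, ← (Pi.basisFun R (Fin N)).span_eq]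
  apply Submodule.span_mono
  rintro _ ⟨i, rfl⟩
  exact ⟨i, i.2, by rw [natSingle_val, Pi.basisFun_apply]⟩

theorem toLin'_transpose_natSingle {N i : ℕ} (hi : i < N) (g : ℕ → ℕ → R) :
    Matrix.toLin' (Matrix.of fun i j : Fin N ↦ g i j)ᵀ (natSingle R N i) =
      fun j : Fin N ↦ g i j := by
  rw [natSingle_val ⟨i, hi⟩]
  ext j
  simp

end NatSingle

theorem rank_pow_eq_finrank_range_toLin'_transpose_pow {K m : Type*} [Field K] [Fintype m]
    [DecidableEq m] (A : Matrix m m K) (j : ℕ) :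
    (A ^ j).rank = Module.finrank K (LinearMap.range (Matrix.toLin' Aᵀ ^ j)) := by
  rw [← Matrix.rank_transpose, Matrix.transpose_pow, ← Matrix.toLin'_pow]
  rfl

theorem eq_zero_of_rank_eq_zero {K m n : Type*} [Field K] [Fintype n] [Finite m]
    {A : Matrix m n K} (h : A.rank = 0) : A = 0 := by
  classical
  rw [Matrix.rank, Submodule.finrank_eq_zero, LinearMap.range_eq_bot] at h
  exact Matrix.toLin'.map_eq_zero_iff.mp h

theorem fnOf_one {a : ℕ} (p q : ℕ) :
    fnOf (1 : Matrix (Fin a) (Fin a) ℂ) p q = if p < a ∧ p = q then 1 else 0 := by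
  simp only [fnOf, Matrix.one_apply, Fin.mk.injEq]
  split_ifs <;> first | rfl | omega

theorem fnOf_zero {a b : ℕ} (p q : ℕ) : fnOf (0 : Matrix (Fin a) (Fin b) ℂ) p q = 0 := by
  simp [fnOf]

theorem fnOf_row_one_one (q : ℕ) : fnOf !![(1 : ℂ), 1] 0 q = if q < 2 then 1 else 0 := by
  by_cases h : q < 2
  · interval_cases q <;> simp [fnOf]
  · simp [fnOf, h]

theorem fnOf_two_by_three (p q : ℕ) : fnOf !![(1 : ℂ), 0, 0; 0, 0, 1] p q =
    if (p = 0 ∧ q = 0) ∨ (p = 1 ∧ q = 2) then 1 else 0 := by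
  by_cases h : p < 2 ∧ q < 3
  · obtain ⟨hp, hq⟩ := h
    interval_cases p <;> interval_cases q <;> simp [fnOf]
  · rw [fnOf, dif_neg h, if_neg (by omega)]

section BasePoint

variable {n : ℕ}

/-- The entries of `X₁°`. -/
noncomputable def baseEnt (n : ℕ) : ℕ → ℕ → ℂ :=
  soEnt n !![1, 1] (fun _ ↦ 1) !![1, 0, 0; 0, 0, 1] 0

theorem baseEnt_zero (hn : 4 ≤ n) (j : ℕ) :
    baseEnt n 0 j = if j = 1 ∨ j = 2 then 1 else 0 := by
  simp only [baseEnt, soEnt, fnOf_row_one_one, true_and]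
  split_ifs <;> first | rfl | omega

/-- The column of the only nonzero entry of `X₁°` in row `i`, for `0 < i < 2n` and `i ≠ n`. -/
def rowTarget (n i : ℕ) : ℕ := if i = n - 2 ∨ i = n - 1 then i + 3 else min (i + 2) (2 * n)

/-- The value of the only nonzero entry of `X₁°` in row `i`, for `0 < i < 2n` and `i ≠ n`. -/
def rowSign (n i : ℕ) : ℂ := if i ≤ n - 2 then 1 else -1

theorem baseEnt_eq_ite (hn : 4 ≤ n) (hne : Even n) {i : ℕ} (h0 : 0 < i) (hi : i < 2 * n)
    (hin : i ≠ n) (j : ℕ) :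
    baseEnt n i j = if j = rowTarget n i then rowSign n i else 0 := by
  obtain ⟨m, rfl⟩ := hne
  simp only [baseEnt, soEnt, fnOf_one, fnOf_zero, fnOf_row_one_one, fnOf_two_by_three, rowTarget,
    rowSign, min_def]
  rw [if_neg (by omega)]
  split_ifs <;> first | rfl | (exfalso; omega) | simp

theorem baseEnt_eq_zero (hn : 4 ≤ n) (hne : Even n) {i : ℕ} (hi : i = n ∨ i = 2 * n)
    (j : ℕ) : baseEnt n i j = 0 := by
  obtain ⟨m, rfl⟩ := hne
  simp only [baseEnt, soEnt, fnOf_one, fnOf_zero, fnOf_row_one_one, fnOf_two_by_three]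
  split_ifs <;> first | rfl | (exfalso; omega) | simp

/-- The index of the `k`-th basis vector in the chain `1 → 3 → ⋯ → 2n`, for even `n` and `k < n`. -/
def chainFromOne (n k : ℕ) : ℕ := if k < n / 2 then 2 * k + 1 else 2 * k + 2

/-- The index of the `k`-th basis vector in the chain `2 → 4 → ⋯ → 2n`, for even `n` and `k < n`. -/
def chainFromTwo (n k : ℕ) : ℕ := if k + 1 < n / 2 then 2 * k + 2 else min (2 * k + 3) (2 * n)

/-- The sign of `X₁°` on the step from `k` to `k + 1`, the same for both chains. -/
def chainSign (n k : ℕ) : ℂ := if k + 1 < n / 2 then 1 else -1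

theorem baseEnt_chainFromOne (hn : 4 ≤ n) (hne : Even n) {k : ℕ} (hk : k < n - 1) (j : ℕ) :
    baseEnt n (chainFromOne n k) j = if j = chainFromOne n (k + 1) then chainSign n k else 0 := by
  obtain ⟨m, rfl⟩ := hne
  have htarget : rowTarget (m + m) (chainFromOne (m + m) k) = chainFromOne (m + m) (k + 1) := by
    grind [rowTarget, chainFromOne]
  have hsign : rowSign (m + m) (chainFromOne (m + m) k) = chainSign (m + m) k := by
    grind [rowSign, chainFromOne, chainSign]
  rw [baseEnt_eq_ite hn ⟨m, rfl⟩ (by grind [chainFromOne]) (by grind [chainFromOne])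
    (by grind [chainFromOne]), htarget, hsign]

theorem baseEnt_chainFromTwo (hn : 4 ≤ n) (hne : Even n) {k : ℕ} (hk : k < n - 1) (j : ℕ) :
    baseEnt n (chainFromTwo n k) j = if j = chainFromTwo n (k + 1) then chainSign n k else 0 := by
  obtain ⟨m, rfl⟩ := hne
  have htarget : rowTarget (m + m) (chainFromTwo (m + m) k) = chainFromTwo (m + m) (k + 1) := by
    grind [rowTarget, chainFromTwo]
  have hsign : rowSign (m + m) (chainFromTwo (m + m) k) = chainSign (m + m) k := by
    grind [rowSign, chainFromTwo, chainSign]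
  rw [baseEnt_eq_ite hn ⟨m, rfl⟩ (by grind [chainFromTwo]) (by grind [chainFromTwo])
    (by grind [chainFromTwo]), htarget, hsign]

theorem exists_eq_chainFromOne_or_chainFromTwo {i : ℕ} (hn : 4 ≤ n) (hne : Even n) (h0 : 0 < i)
    (hi : i ≤ 2 * n) (hin : i ≠ n) :
    ∃ k ≤ n - 1, chainFromOne n k = i ∨ chainFromTwo n k = i := by
  obtain ⟨m, rfl⟩ := hne
  rcases le_or_gt i (m + m) with hle | hgt <;> rcases Nat.even_or_odd' i with ⟨k, rfl | rfl⟩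
  · exact ⟨k - 1, by omega, .inr (by grind [chainFromTwo])⟩
  · exact ⟨k, by omega, .inl (by grind [chainFromOne])⟩
  · exact ⟨k - 1, by omega, .inl (by grind [chainFromOne])⟩
  · exact ⟨k - 1, by omega, .inr (by grind [chainFromTwo])⟩

/-- Right multiplication by `X₁°` on row vectors. -/
noncomputable def baseRowEnd (n : ℕ) : Module.End ℂ (Fin (2 * n + 1) → ℂ) :=
  Matrix.toLin' (soMat n !![1, 1] (fun _ ↦ 1) !![1, 0, 0; 0, 0, 1] 0)ᵀ

theorem baseRowEnd_natSingle {i : ℕ} (hi : i < 2 * n + 1) :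
    baseRowEnd n (natSingle ℂ (2 * n + 1) i) = fun j : Fin (2 * n + 1) ↦ baseEnt n i j :=
  toLin'_transpose_natSingle hi (baseEnt n)

theorem baseRowEnd_natSingle_eq_zero {i : ℕ} (hn : 4 ≤ n) (hne : Even n)
    (hi : i = n ∨ i = 2 * n) : baseRowEnd n (natSingle ℂ (2 * n + 1) i) = 0 := by
  rw [baseRowEnd_natSingle (by omega)]
  exact funext fun j ↦ baseEnt_eq_zero hn hne hi j

theorem baseRowEnd_natSingle_of_eq_ite {i i' : ℕ} {c : ℂ} (hi : i < 2 * n + 1)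
    (h : ∀ j, baseEnt n i j = if j = i' then c else 0) :
    baseRowEnd n (natSingle ℂ (2 * n + 1) i) = c • natSingle ℂ (2 * n + 1) i' := by
  rw [baseRowEnd_natSingle hi]
  ext j
  simp [h, natSingle]

theorem isDiamond_baseRowEnd (hn : 4 ≤ n) (hne : Even n) :
    IsDiamond (baseRowEnd n) (n - 1) (chainSign n) (natSingle ℂ (2 * n + 1) 0)
      (fun k ↦ natSingle ℂ (2 * n + 1) (chainFromOne n k))
      (fun k ↦ natSingle ℂ (2 * n + 1) (chainFromTwo n k)) where
  map_source := by
    rw [baseRowEnd_natSingle (by omega)]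
    ext j
    have hone : chainFromOne n 0 = 1 := by grind [chainFromOne]
    have htwo : chainFromTwo n 0 = 2 := by grind [chainFromTwo]
    rw [baseEnt_zero hn]
    simp only [Pi.add_apply, natSingle, hone, htwo]
    split_ifs <;> first | omega | simp
  map_left k hk :=
    baseRowEnd_natSingle_of_eq_ite (by grind [chainFromOne]) (baseEnt_chainFromOne hn hne hk)
  map_right k hk :=
    baseRowEnd_natSingle_of_eq_ite (by grind [chainFromTwo]) (baseEnt_chainFromTwo hn hne hk)
  scalar_ne_zero k _ := by
    unfold chainSign
    split_ifs <;> simp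
  left_eq_right := congrArg (natSingle ℂ (2 * n + 1)) (by grind [chainFromOne, chainFromTwo])
  map_sink := baseRowEnd_natSingle_eq_zero hn hne (.inr (by grind [chainFromOne]))

theorem span_diamond_baseRowEnd (hn : 4 ≤ n) (hne : Even n) :
    Submodule.span ℂ ({natSingle ℂ (2 * n + 1) 0, natSingle ℂ (2 * n + 1) n} ∪
      (fun k ↦ natSingle ℂ (2 * n + 1) (chainFromOne n k)) '' Set.Iic (n - 1) ∪
      (fun k ↦ natSingle ℂ (2 * n + 1) (chainFromTwo n k)) '' Set.Iic (n - 1)) = ⊤ := by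
  rw [eq_top_iff, ← span_natSingle]
  apply Submodule.span_mono
  rintro _ ⟨i, hi, rfl⟩
  rcases Nat.eq_zero_or_pos i with rfl | h0
  · exact .inl (.inl (.inl rfl))
  rcases eq_or_ne i n with rfl | hin
  · exact .inl (.inl (.inr rfl))
  rcases exists_eq_chainFromOne_or_chainFromTwo hn hne h0 (Nat.lt_succ_iff.mp hi) hin with
    ⟨k, hk, rfl | rfl⟩
  · exact .inl (.inr ⟨k, hk, rfl⟩)
  · exact .inr ⟨k, hk, rfl⟩

end BasePoint

/-- Let `X₁° = X((1 1)ᵀ-data: A_1 = (1 1), A_i = I₂ for 2 ≤ i ≤ m/2 − 1,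
A_{m/2} = I_{2×3}, A_{m+1} = 0)`. Then `(X₁°)^{n+1} = 0` and
`rank((X₁°)^j) = max(1−j,0) + max(n−1−j,0) + max(n+1−j,0)` for all `j ≥ 0`
(truncated subtraction on ℕ); i.e. the Jordan form of `X₁°` consists of one
block of size 1, one of size n−1, and one of size n+1. -/
theorem stmt4 (n : ℕ) (hn : 4 ≤ n) (hne : Even n)
    (X : Matrix (Fin (2 * n + 1)) (Fin (2 * n + 1)) ℂ)
    (hX : X = soMat n !![1, 1] (fun _ => 1) !![1, 0, 0; 0, 0, 1] 0) :
    X ^ (n + 1) = 0 ∧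
      ∀ j : ℕ, (X ^ j).rank = (1 - j) + (n - 1 - j) + (n + 1 - j) := by
  have hrank (j : ℕ) : (X ^ j).rank = (1 - j) + (n - 1 - j) + (n + 1 - j) := by
    have hdim : Module.finrank ℂ (Fin (2 * n + 1) → ℂ) = 2 * (n - 1) + 3 := by
      rw [Module.finrank_fin_fun]
      omega
    have h := (isDiamond_baseRowEnd hn hne).finrank_range_pow
      (baseRowEnd_natSingle_eq_zero hn hne (.inl rfl)) hdim (span_diamond_baseRowEnd hn hne) j
    rw [rank_pow_eq_finrank_range_toLin'_transpose_pow, hX]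
    rwa [show n - 1 + 2 = n + 1 by omega] at h
  have hzero : (X ^ (n + 1)).rank = 0 := by
    rw [hrank]
    omega
  exact ⟨eq_zero_of_rank_eq_zero hzero, hrank⟩
end

section
/- Let b = (b₁,…,b₆) ∈ ℂ⁶ and define the polynomial D_b(a) = (2ab₅ + 2a²(b₁b₅+b₃²))·(−2ab₂ + 2a²(b₂b₆+b₄²)) − (1 + a(b₁−b₆) − a²(b₁b₆+2b₃b₄+b₂b₅))² ∈ ℂ[a]. If q_b(λ) = λ⁶ − 2(b₁+b₆)λ⁴ + ((b₁+b₆)² − 4b₂b₅ − 4b₃b₄)λ² + 4((b₁+b₆)b₃b₄ − b₅b₄² − b₂b₃²) is squarefree and q_b(0) ≠ 0 (equivalently, q_b has six pairwise distinct nonzero complex roots), then there exists a ∈ ℂ with D_b(a) = 0. -/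
open Polynomial in
/-- The polynomial `q_b(λ) = λ⁶ − 2(b₁+b₆)λ⁴ + ((b₁+b₆)² − 4b₂b₅ − 4b₃b₄)λ²
+ 4((b₁+b₆)b₃b₄ − b₅b₄² − b₂b₃²) ∈ ℂ[λ]`. -/
noncomputable def qpoly (b1 b2 b3 b4 b5 b6 : ℂ) : Polynomial ℂ :=
  X ^ 6 - C (2 * (b1 + b6)) * X ^ 4
    + C ((b1 + b6) ^ 2 - 4 * b2 * b5 - 4 * b3 * b4) * X ^ 2
    + C (4 * ((b1 + b6) * b3 * b4 - b5 * b4 ^ 2 - b2 * b3 ^ 2))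

/-- The quartic `D_b(a) = (2ab₅ + 2a²(b₁b₅+b₃²))·(−2ab₂ + 2a²(b₂b₆+b₄²))
− (1 + a(b₁−b₆) − a²(b₁b₆+2b₃b₄+b₂b₅))²`. -/
noncomputable def Dfun (b1 b2 b3 b4 b5 b6 a : ℂ) : ℂ :=
  (2 * a * b5 + 2 * a ^ 2 * (b1 * b5 + b3 ^ 2))
      * (-2 * a * b2 + 2 * a ^ 2 * (b2 * b6 + b4 ^ 2))
    - (1 + a * (b1 - b6) - a ^ 2 * (b1 * b6 + 2 * b3 * b4 + b2 * b5)) ^ 2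

/-!
`D_b` is a polynomial in `a` with constant term `-1`, so it has no root only if its other four
coefficients vanish. Write `p = b₃b₄`, `m = b₂b₅`, `t = b₅b₄²`. The vanishing says that `b₁ = b₆`
(call it `c`), `c² + 2p = m`, `t = b₂b₃²` and `2ct = p(2m - p)`, and then
`q_b = λ⁶ - 4cλ⁴ - 12pλ² + 8(cp - t)`. Since also `t² = mp²`, either `p = t = 0`, so that
`q_b = λ⁴(λ² - 4c)`, or `(c, p, t) = (-3u, -4u², 4u³)` for some `u`, so that `q_b = (λ² + 4u)³`.
Either way `q_b` has a root of multiplicity at least three.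
-/

section General

open Polynomial

/-- The polynomial `q_b(λ)` over an arbitrary commutative ring; over `ℂ` it is `qpoly`. -/
noncomputable def sexticPoly {R : Type*} [CommRing R] (b1 b2 b3 b4 b5 b6 : R) : R[X] :=
  X ^ 6 - C (2 * (b1 + b6)) * X ^ 4
    + C ((b1 + b6) ^ 2 - 4 * b2 * b5 - 4 * b3 * b4) * X ^ 2
    + C (4 * ((b1 + b6) * b3 * b4 - b5 * b4 ^ 2 - b2 * b3 ^ 2))

/-- The quartic `D_b` over an arbitrary commutative ring, as a polynomial in the variable `a`;
over `ℂ` its evaluation map is `Dfun`. -/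
noncomputable def quarticPoly {R : Type*} [CommRing R] (b1 b2 b3 b4 b5 b6 : R) : R[X] :=
  (2 * X * C b5 + 2 * X ^ 2 * C (b1 * b5 + b3 ^ 2))
      * (-2 * X * C b2 + 2 * X ^ 2 * C (b2 * b6 + b4 ^ 2))
    - (1 + X * C (b1 - b6) - X ^ 2 * C (b1 * b6 + 2 * b3 * b4 + b2 * b5)) ^ 2

theorem eval_quarticPoly (b1 b2 b3 b4 b5 b6 a : ℂ) :
    (quarticPoly b1 b2 b3 b4 b5 b6).eval a = Dfun b1 b2 b3 b4 b5 b6 a := by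
  simp [quarticPoly, Dfun]

section CommRing

variable {R : Type*} [CommRing R]

theorem quarticPoly_eq_sum (b1 b2 b3 b4 b5 b6 : R) :
    quarticPoly b1 b2 b3 b4 b5 b6 =
      C (4 * (b1 * b5 + b3 ^ 2) * (b2 * b6 + b4 ^ 2)
          - (b1 * b6 + 2 * b3 * b4 + b2 * b5) ^ 2) * X ^ 4
        + C (4 * b5 * (b2 * b6 + b4 ^ 2) - 4 * b2 * (b1 * b5 + b3 ^ 2)
          + 2 * (b1 - b6) * (b1 * b6 + 2 * b3 * b4 + b2 * b5)) * X ^ 3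
        + C (2 * (b1 * b6 + 2 * b3 * b4 - b2 * b5) - (b1 - b6) ^ 2) * X ^ 2
        + C (-2 * (b1 - b6)) * X
        - 1 := by
  simp only [quarticPoly, map_add, map_sub, map_mul, map_pow, map_neg, map_ofNat]
  ring

theorem relations_of_coeff_quarticPoly_eq_zero [NoZeroDivisors R] [NeZero (2 : R)]
    {b1 b2 b3 b4 b5 b6 : R}
    (h : ∀ n ≠ 0, (quarticPoly b1 b2 b3 b4 b5 b6).coeff n = 0) :
    b1 = b6 ∧ b1 ^ 2 + 2 * (b3 * b4) = b2 * b5 ∧ b5 * b4 ^ 2 = b2 * b3 ^ 2 ∧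
      2 * b1 * (b5 * b4 ^ 2) = b3 * b4 * (2 * (b2 * b5) - b3 * b4) := by
  simp only [quarticPoly_eq_sum, coeff_add, coeff_sub, coeff_C_mul, coeff_X_pow, coeff_X,
    coeff_one] at h
  have two_ne : (2 : R) ≠ 0 := two_ne_zero
  obtain rfl : b1 = b6 := by simpa [two_ne, sub_eq_zero] using h 1 one_ne_zero
  have hm : b1 * b1 + 2 * b3 * b4 - b2 * b5 = 0 := by
    simpa [two_ne] using h 2 two_ne_zero
  have cubic_coeff : 4 * b5 * (b2 * b1 + b4 ^ 2) - 4 * b2 * (b1 * b5 + b3 ^ 2) = 0 := by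
    simpa using h 3 three_ne_zero
  have quartic_coeff : 4 * (b1 * b5 + b3 ^ 2) * (b2 * b1 + b4 ^ 2)
      - (b1 * b1 + 2 * b3 * b4 + b2 * b5) ^ 2 = 0 := by
    simpa using h 4 four_ne_zero
  have four_ne : (4 : R) ≠ 0 := by
    rw [show (4 : R) = 2 * 2 by norm_num]
    exact mul_ne_zero two_ne two_ne
  have ht : b5 * b4 ^ 2 = b2 * b3 ^ 2 :=
    mul_left_cancel₀ four_ne (by linear_combination cubic_coeff)
  refine ⟨rfl, by linear_combination hm, ht, mul_left_cancel₀ four_ne ?_⟩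
  linear_combination quartic_coeff + 4 * b1 * ht
    + (b1 ^ 2 + 2 * (b3 * b4) - b2 * b5) * hm

theorem sexticPoly_eq_of_relations {c b2 b3 b4 b5 : R}
    (hm : c ^ 2 + 2 * (b3 * b4) = b2 * b5) (ht : b5 * b4 ^ 2 = b2 * b3 ^ 2) :
    sexticPoly c b2 b3 b4 b5 c =
      X ^ 6 - C (4 * c) * X ^ 4 - C (12 * (b3 * b4)) * X ^ 2
        + C (8 * (c * (b3 * b4) - b5 * b4 ^ 2)) := by
  have coeff_two : (c + c) ^ 2 - 4 * b2 * b5 - 4 * b3 * b4 = -(12 * (b3 * b4)) := by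
    linear_combination 4 * hm
  have coeff_zero : 4 * ((c + c) * b3 * b4 - b5 * b4 ^ 2 - b2 * b3 ^ 2) =
      8 * (c * (b3 * b4) - b5 * b4 ^ 2) := by
    linear_combination 4 * ht
  rw [sexticPoly, coeff_two, coeff_zero, C_neg, show 2 * (c + c) = 4 * c by ring]
  ring

end CommRing

section Field

variable {K : Type*} [Field K]

theorem eq_zero_or_exists_eq_neg_three_mul {c m p t : K} (hm : c ^ 2 + 2 * p = m)
    (hct : 2 * c * t = p * (2 * m - p)) (ht : t ^ 2 = m * p ^ 2) :
    (p = 0 ∧ t = 0) ∨ ∃ u, c = -3 * u ∧ p = -4 * u ^ 2 ∧ t = 4 * u ^ 3 := by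
  rcases eq_or_ne p 0 with rfl | hp
  · exact .inl ⟨rfl, by simpa using ht⟩
  obtain ⟨u, rfl⟩ : ∃ u, t = -u * p := ⟨-t / p, by field_simp⟩
  have hmu : m = u ^ 2 := mul_right_cancel₀ (pow_ne_zero 2 hp) (by linear_combination -ht)
  have hpu : p = 2 * u * (c + u) :=
    mul_right_cancel₀ hp (by linear_combination hct + 2 * p * hmu)
  have hcu : c + u ≠ 0 := fun h => hp (by rw [hpu, h, mul_zero])
  have hc : c = -3 * u :=
    mul_right_cancel₀ hcu (by linear_combination hm - 2 * hpu + hmu)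
  subst hc
  have hp4 : p = -4 * u ^ 2 := by linear_combination hpu
  exact .inr ⟨u, rfl, hp4, by linear_combination -u * hp4⟩

variable [IsAlgClosed K]

theorem coeff_eq_zero_of_forall_eval_ne_zero {P : K[X]} (h : ∀ a, P.eval a ≠ 0)
    (n : ℕ) (hn : n ≠ 0) : P.coeff n = 0 := by
  have hdeg : P.degree = 0 := by
    by_contra hd
    obtain ⟨a, ha⟩ := IsAlgClosed.exists_root P hd
    exact h a ha
  rw [eq_C_of_degree_eq_zero hdeg, coeff_C_of_ne_zero hn]

theorem exists_X_sub_C_dvd_X_sq_add_C (d : K) : ∃ x : K, X - C x ∣ X ^ 2 + C d := by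
  obtain ⟨x, hx⟩ := IsAlgClosed.exists_pow_nat_eq (-d) two_pos
  exact ⟨x, dvd_iff_isRoot.mpr (by simp [hx])⟩

theorem exists_X_sub_C_pow_three_dvd_sexticPoly {c b2 b3 b4 b5 : K}
    (hm : c ^ 2 + 2 * (b3 * b4) = b2 * b5) (ht : b5 * b4 ^ 2 = b2 * b3 ^ 2)
    (hct : 2 * c * (b5 * b4 ^ 2) = b3 * b4 * (2 * (b2 * b5) - b3 * b4)) :
    ∃ x : K, (X - C x) ^ 3 ∣ sexticPoly c b2 b3 b4 b5 c := by
  have ht_sq : (b5 * b4 ^ 2) ^ 2 = b2 * b5 * (b3 * b4) ^ 2 := by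
    linear_combination b5 * b4 ^ 2 * ht
  rw [sexticPoly_eq_of_relations hm ht]
  rcases eq_zero_or_exists_eq_neg_three_mul hm hct ht_sq with ⟨hp, ht0⟩ | ⟨u, rfl, hp, htu⟩
  · refine ⟨0, X * (X ^ 2 - C (4 * c)), ?_⟩
    simp only [hp, ht0, mul_zero, sub_zero, map_zero, zero_mul, add_zero]
    ring
  · obtain ⟨x, hx⟩ := exists_X_sub_C_dvd_X_sq_add_C (4 * u)
    refine ⟨x, (pow_dvd_pow_of_dvd hx 3).trans (dvd_of_eq ?_)⟩
    simp only [hp, htu, map_sub, map_mul, map_pow, map_neg, map_ofNat]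
    ring

theorem stmt10_general [NeZero (2 : K)] (b1 b2 b3 b4 b5 b6 : K)
    (hq : ∀ x, ¬ (X - C x) ^ 3 ∣ sexticPoly b1 b2 b3 b4 b5 b6) :
    ∃ a, (quarticPoly b1 b2 b3 b4 b5 b6).eval a = 0 := by
  by_contra! hD
  obtain ⟨rfl, hm, ht, hct⟩ :=
    relations_of_coeff_quarticPoly_eq_zero (coeff_eq_zero_of_forall_eval_ne_zero hD)
  obtain ⟨x, hx⟩ := exists_X_sub_C_pow_three_dvd_sexticPoly hm ht hct
  exact hq x hx

end Field

end General

/-- If `q_b` is squarefree and `q_b(0) ≠ 0` (equivalently, `q_b` has six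
pairwise distinct nonzero complex roots), then there exists `a ∈ ℂ` with
`D_b(a) = 0`. -/
theorem stmt10 (b1 b2 b3 b4 b5 b6 : ℂ)
    (hsq : Squarefree (qpoly b1 b2 b3 b4 b5 b6))
    (h0 : (qpoly b1 b2 b3 b4 b5 b6).eval 0 ≠ 0) :
    ∃ a : ℂ, Dfun b1 b2 b3 b4 b5 b6 a = 0 := by
  simpa only [eval_quarticPoly] using stmt10_general b1 b2 b3 b4 b5 b6 fun x hx =>
    Polynomial.not_isUnit_X_sub_C x (hsq _ ((Dvd.intro _ (pow_three' _).symm).trans hx))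
end

section
/- Let b₁,…,b₆ ∈ ℂ satisfy b₁ = b₆, b₂b₅ = b₁² + 2b₃b₄, b₅b₄² = b₂b₃², and 2b₁b₂b₃² = 3b₃²b₄² + 2b₁²b₃b₄. Then the degree-7 polynomial λ·q_b(λ) has a repeated root in ℂ; equivalently, q_b(λ) = λ⁶ − 2(b₁+b₆)λ⁴ + ((b₁+b₆)² − 4b₂b₅ − 4b₃b₄)λ² + 4((b₁+b₆)b₃b₄ − b₅b₄² − b₂b₃²) is not squarefree or satisfies q_b(0) = 0. -/
/-!
The polynomial `q_b` is a cubic in `λ²`. If `b₃b₄ = 0`, its constant coefficient vanishes, so `λ²`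
divides it. Otherwise put `w = b₂b₃/b₄ = b₅b₄/b₃`, so that `b₂b₅ = w²`. The remaining relations
become `w² = b₁² + 2b₃b₄` and `2b₁w = 3b₃b₄ + 2b₁²`. Eliminating `b₃b₄` gives
`(3w - b₁)(w - b₁) = 0`, while subtracting gives `b₃b₄ = -(w - b₁)²`, so `b₁ = 3w` and
`b₃b₄ = -4w²`. In this case `q_b(λ) = (λ² - 4w)³`.
-/

section StableSextic

open Polynomial

/-- The polynomial `q_b` over an arbitrary commutative ring; `qpoly` is the case of `ℂ`. -/
noncomputable def stableSextic {R : Type*} [CommRing R] (b1 b2 b3 b4 b5 b6 : R) : R[X] :=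
  X ^ 6 - C (2 * (b1 + b6)) * X ^ 4
    + C ((b1 + b6) ^ 2 - 4 * b2 * b5 - 4 * b3 * b4) * X ^ 2
    + C (4 * ((b1 + b6) * b3 * b4 - b5 * b4 ^ 2 - b2 * b3 ^ 2))

section CommRing

variable {R : Type*} [CommRing R]

theorem monic_stableSextic (b1 b2 b3 b4 b5 b6 : R) :
    (stableSextic b1 b2 b3 b4 b5 b6).Monic := by
  nontriviality R
  unfold stableSextic
  monicity!

theorem eval_zero_stableSextic (b1 b2 b3 b4 b5 b6 : R) :
    (stableSextic b1 b2 b3 b4 b5 b6).eval 0 =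
      4 * ((b1 + b6) * b3 * b4 - b5 * b4 ^ 2 - b2 * b3 ^ 2) := by
  simp [stableSextic]

theorem X_sq_dvd_stableSextic {b1 b2 b3 b4 b5 b6 : R}
    (h : (stableSextic b1 b2 b3 b4 b5 b6).eval 0 = 0) :
    X ^ 2 ∣ stableSextic b1 b2 b3 b4 b5 b6 := by
  rw [eval_zero_stableSextic] at h
  rw [stableSextic, h, C_0, add_zero]
  exact ⟨X ^ 4 - C (2 * (b1 + b6)) * X ^ 2
    + C ((b1 + b6) ^ 2 - 4 * b2 * b5 - 4 * b3 * b4), by ring⟩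

theorem stableSextic_eq_cube {b2 b3 b4 b5 w : R} (h25 : b2 * b5 = w ^ 2)
    (h34 : b3 * b4 = -4 * w ^ 2) (h23 : b2 * b3 = w * b4) (h54 : b5 * b4 = w * b3) :
    stableSextic (3 * w) b2 b3 b4 b5 (3 * w) = (X ^ 2 - C (4 * w)) ^ 3 := by
  have quadratic_coeff : (3 * w + 3 * w) ^ 2 - 4 * b2 * b5 - 4 * b3 * b4 = 48 * w ^ 2 := by
    linear_combination -4 * h25 - 4 * h34
  have constant_coeff :
      4 * ((3 * w + 3 * w) * b3 * b4 - b5 * b4 ^ 2 - b2 * b3 ^ 2) = -64 * w ^ 3 := by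
    linear_combination 16 * w * h34 - 4 * b4 * h54 - 4 * b3 * h23
  rw [stableSextic, quadratic_coeff, constant_coeff]
  simp only [C_mul, C_add, C_neg, C_pow, map_ofNat]
  ring

end CommRing

section IsDomain

variable {R : Type*} [CommRing R] [IsDomain R]

theorem eval_zero_stableSextic_eq_zero_of_mul_eq_zero {b1 b2 b3 b4 b5 b6 : R}
    (h : b5 * b4 ^ 2 = b2 * b3 ^ 2) (h34 : b3 * b4 = 0) :
    (stableSextic b1 b2 b3 b4 b5 b6).eval 0 = 0 := by
  rw [eval_zero_stableSextic]
  rcases mul_eq_zero.1 h34 with rfl | rfl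
  · linear_combination -4 * h
  · linear_combination 4 * h

theorem eq_three_mul_and_eq_neg_four_mul_sq {a s w : R} (hs : s ≠ 0)
    (hw : w ^ 2 = a ^ 2 + 2 * s) (haw : 2 * a * w = 3 * s + 2 * a ^ 2) :
    a = 3 * w ∧ s = -4 * w ^ 2 := by
  have hprod : (3 * w - a) * (w - a) = 0 := by linear_combination 3 * hw - 2 * haw
  have hs_eq : s = -(w - a) ^ 2 := by linear_combination hw - haw
  have hne : w - a ≠ 0 := fun h ↦ hs (by rw [hs_eq, h, zero_pow two_ne_zero, neg_zero])
  have ha : a = 3 * w := by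
    linear_combination -(mul_eq_zero.1 hprod).resolve_right hne
  subst ha
  exact ⟨rfl, by linear_combination hs_eq⟩

end IsDomain

section Field

variable {K : Type*} [Field K]

theorem exists_mul_eq_mul_of_mul_sq_eq_mul_sq {b2 b3 b4 b5 : K} (hb4 : b4 ≠ 0)
    (h : b5 * b4 ^ 2 = b2 * b3 ^ 2) : ∃ w, b2 * b3 = w * b4 ∧ b5 * b4 = w * b3 := by
  refine ⟨b2 * b3 / b4, (div_mul_cancel₀ _ hb4).symm, ?_⟩
  field_simp
  exact h

variable {b1 b2 b3 b4 b5 b6 : K}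

theorem eval_zero_eq_zero_or_stableSextic_eq_cube (h1 : b1 = b6)
    (h2 : b2 * b5 = b1 ^ 2 + 2 * b3 * b4) (h3 : b5 * b4 ^ 2 = b2 * b3 ^ 2)
    (h4 : 2 * b1 * b2 * b3 ^ 2 = 3 * b3 ^ 2 * b4 ^ 2 + 2 * b1 ^ 2 * b3 * b4) :
    (stableSextic b1 b2 b3 b4 b5 b6).eval 0 = 0 ∨
      ∃ w, stableSextic b1 b2 b3 b4 b5 b6 = (X ^ 2 - C (4 * w)) ^ 3 := by
  rcases eq_or_ne (b3 * b4) 0 with h34 | h34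
  · exact Or.inl (eval_zero_stableSextic_eq_zero_of_mul_eq_zero h3 h34)
  obtain ⟨w, h23, h54⟩ := exists_mul_eq_mul_of_mul_sq_eq_mul_sq (right_ne_zero_of_mul h34) h3
  have h25 : b2 * b5 = w ^ 2 := mul_right_cancel₀ h34 <| by
    linear_combination b5 * b4 * h23 + w * b4 * h54
  have hw : w ^ 2 = b1 ^ 2 + 2 * (b3 * b4) := by linear_combination h2 - h25
  have haw : 2 * b1 * w = 3 * (b3 * b4) + 2 * b1 ^ 2 := mul_right_cancel₀ h34 <| by
    linear_combination h4 - 2 * b1 * b3 * h23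
  obtain ⟨rfl, hs⟩ := eq_three_mul_and_eq_neg_four_mul_sq h34 hw haw
  subst h1
  exact Or.inr ⟨w, stableSextic_eq_cube h25 hs h23 h54⟩

theorem not_squarefree_stableSextic (h1 : b1 = b6)
    (h2 : b2 * b5 = b1 ^ 2 + 2 * b3 * b4) (h3 : b5 * b4 ^ 2 = b2 * b3 ^ 2)
    (h4 : 2 * b1 * b2 * b3 ^ 2 = 3 * b3 ^ 2 * b4 ^ 2 + 2 * b1 ^ 2 * b3 * b4) :
    ¬ Squarefree (stableSextic b1 b2 b3 b4 b5 b6) := by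
  intro hsq
  rcases eval_zero_eq_zero_or_stableSextic_eq_cube h1 h2 h3 h4 with h0 | ⟨w, hcube⟩
  · exact not_isUnit_X (hsq X (by simpa only [sq] using X_sq_dvd_stableSextic h0))
  · refine not_isUnit_of_natDegree_pos (X ^ 2 - C (4 * w)) ?_ (hsq _ ?_)
    · rw [natDegree_X_pow_sub_C]
      exact two_pos
    · rw [hcube, ← sq]
      exact pow_dvd_pow _ (by norm_num)

theorem exists_three_le_rootMultiplicity_X_mul_stableSextic [IsAlgClosed K] (h1 : b1 = b6)
    (h2 : b2 * b5 = b1 ^ 2 + 2 * b3 * b4) (h3 : b5 * b4 ^ 2 = b2 * b3 ^ 2)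
    (h4 : 2 * b1 * b2 * b3 ^ 2 = 3 * b3 ^ 2 * b4 ^ 2 + 2 * b1 ^ 2 * b3 * b4) :
    ∃ z, 3 ≤ (X * stableSextic b1 b2 b3 b4 b5 b6).rootMultiplicity z := by
  simp only [le_rootMultiplicity_iff (monic_X.mul (monic_stableSextic b1 b2 b3 b4 b5 b6)).ne_zero]
  rcases eval_zero_eq_zero_or_stableSextic_eq_cube h1 h2 h3 h4 with h0 | ⟨w, hcube⟩
  · refine ⟨0, ?_⟩
    rw [C_0, sub_zero, pow_succ']
    exact mul_dvd_mul_left X (X_sq_dvd_stableSextic h0)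
  · obtain ⟨z, hz⟩ := IsAlgClosed.exists_pow_nat_eq (4 * w) two_pos
    refine ⟨z, dvd_mul_of_dvd_right ?_ X⟩
    rw [hcube, ← hz, C_pow]
    exact pow_dvd_pow_of_dvd (sub_dvd_pow_sub_pow X (C z) 2) 3

theorem stmt11_general [IsAlgClosed K] (h1 : b1 = b6)
    (h2 : b2 * b5 = b1 ^ 2 + 2 * b3 * b4) (h3 : b5 * b4 ^ 2 = b2 * b3 ^ 2)
    (h4 : 2 * b1 * b2 * b3 ^ 2 = 3 * b3 ^ 2 * b4 ^ 2 + 2 * b1 ^ 2 * b3 * b4) :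
    (∃ z, 3 ≤ (X * stableSextic b1 b2 b3 b4 b5 b6).rootMultiplicity z) ∧
      ¬ Squarefree (stableSextic b1 b2 b3 b4 b5 b6) :=
  ⟨exists_three_le_rootMultiplicity_X_mul_stableSextic h1 h2 h3 h4,
    not_squarefree_stableSextic h1 h2 h3 h4⟩

end Field

end StableSextic

/-- If `b₁ = b₆`, `b₂b₅ = b₁² + 2b₃b₄`, `b₅b₄² = b₂b₃²` and
`2b₁b₂b₃² = 3b₃²b₄² + 2b₁²b₃b₄`, then the degree-7 polynomial `λ·q_b(λ)` has a
repeated root in `ℂ`; equivalently, `q_b` is not squarefree or `q_b(0) = 0`. -/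
theorem stmt11 (b1 b2 b3 b4 b5 b6 : ℂ)
    (h1 : b1 = b6) (h2 : b2 * b5 = b1 ^ 2 + 2 * b3 * b4)
    (h3 : b5 * b4 ^ 2 = b2 * b3 ^ 2)
    (h4 : 2 * b1 * b2 * b3 ^ 2 = 3 * b3 ^ 2 * b4 ^ 2 + 2 * b1 ^ 2 * b3 * b4) :
    (∃ z : ℂ,
        2 ≤ (Polynomial.X * qpoly b1 b2 b3 b4 b5 b6).rootMultiplicity z) ∧
      (¬ Squarefree (qpoly b1 b2 b3 b4 b5 b6) ∨
        (qpoly b1 b2 b3 b4 b5 b6).eval 0 = 0) := by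
  obtain ⟨⟨z, hz⟩, hsq⟩ := stmt11_general h1 h2 h3 h4
  exact ⟨⟨z, (Nat.le_succ 2).trans hz⟩, Or.inl hsq⟩
end

section
/- Let b₁,…,b₆ ∈ ℂ satisfy b₁ ≠ 0, b₆ = b₁, b₁² = −(9/4)·b₃b₄, b₂ = −3b₄²/(4b₁), and b₅ = −3b₃²/(4b₁). Then q_b(λ) = (λ² − (4/3)b₁)³; in particular q_b has repeated roots. -/
/- The product `b₃b₄` equals `c b₁²` with `c = -4/9`, while `b₂` and `b₅` equal `d b₄² / b₁` and
`d b₃² / b₁` with `d = -3/4`. The parameters `b₂, …, b₅` enter `q_b` only through `b₂b₅`, `b₃b₄`,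
`b₅b₄²` and `b₂b₃²`, and each of these is a constant times a power of `b₁`, so `q_b` can be
compared with the cube coefficient by coefficient. A root of `λ² - (4/3)b₁` is at least a triple
root of its cube. -/

section Monomials

variable {G : Type*} [CommGroupWithZero G] {c d x y z v w : G}

theorem mul_sq_eq_of_mul_eq_of_eq_div (hx : x ≠ 0) (hyz : y * z = c * x ^ 2)
    (hw : w = d * y ^ 2 / x) : w * z ^ 2 = d * c ^ 2 * x ^ 3 :=
  calc
    w * z ^ 2 = d * (y * z) ^ 2 / x := by rw [hw, mul_pow, ← mul_assoc, div_mul_eq_mul_div]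
    _ = d * c ^ 2 * x ^ 3 := by rw [hyz]; field_simp

theorem mul_eq_sq_of_mul_eq_of_eq_div (hx : x ≠ 0) (hyz : y * z = c * x ^ 2)
    (hv : v = d * z ^ 2 / x) (hw : w = d * y ^ 2 / x) : v * w = (c * d * x) ^ 2 :=
  calc
    v * w = (d * (y * z) / x) ^ 2 := by rw [hv, hw]; field_simp
    _ = (c * d * x) ^ 2 := by rw [hyz]; field_simp

end Monomials

section Cube

open Polynomial

theorem X_sq_sub_C_pow_three {R : Type*} [CommRing R] (t : R) :
    (X ^ 2 - C t) ^ 3 = X ^ 6 - C (3 * t) * X ^ 4 + C (3 * t ^ 2) * X ^ 2 + C (-t ^ 3) := by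
  simp only [C_mul, C_neg, C_pow, C_ofNat]
  ring

theorem qpoly_eq_X_sq_sub_C_pow_three {b1 b2 b3 b4 b5 b6 t : ℂ}
    (h4 : 2 * (b1 + b6) = 3 * t)
    (h2 : (b1 + b6) ^ 2 - 4 * b2 * b5 - 4 * b3 * b4 = 3 * t ^ 2)
    (h0 : 4 * ((b1 + b6) * b3 * b4 - b5 * b4 ^ 2 - b2 * b3 ^ 2) = -t ^ 3) :
    qpoly b1 b2 b3 b4 b5 b6 = (X ^ 2 - C t) ^ 3 := by
  rw [qpoly, h4, h2, h0, X_sq_sub_C_pow_three]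

theorem le_rootMultiplicity_pow_of_isRoot {R : Type*} [CommRing R] {p : R[X]} {z : R} {n : ℕ}
    (hp : p ^ n ≠ 0) (hz : p.IsRoot z) : n ≤ (p ^ n).rootMultiplicity z :=
  (le_rootMultiplicity_iff hp).2 (pow_dvd_pow_of_dvd (dvd_iff_isRoot.2 hz) n)

theorem exists_le_rootMultiplicity_pow {K : Type*} [Field K] [IsAlgClosed K] {p : K[X]}
    (hp : 0 < p.degree) (n : ℕ) : ∃ z, n ≤ (p ^ n).rootMultiplicity z := by
  obtain ⟨z, hz⟩ := IsAlgClosed.exists_root p hp.ne'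
  exact ⟨z, le_rootMultiplicity_pow_of_isRoot (pow_ne_zero n (ne_zero_of_degree_gt hp)) hz⟩

end Cube

/-- If `b₁ ≠ 0`, `b₆ = b₁`, `b₁² = −(9/4)b₃b₄`, `b₂ = −3b₄²/(4b₁)` and
`b₅ = −3b₃²/(4b₁)`, then `q_b(λ) = (λ² − (4/3)b₁)³`; in particular `q_b` has
repeated roots. -/
theorem stmt12 (b1 b2 b3 b4 b5 b6 : ℂ) (hb1 : b1 ≠ 0) (hb6 : b6 = b1)
    (h1 : b1 ^ 2 = -(9 / 4) * b3 * b4)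
    (h2 : b2 = -3 * b4 ^ 2 / (4 * b1))
    (h5 : b5 = -3 * b3 ^ 2 / (4 * b1)) :
    qpoly b1 b2 b3 b4 b5 b6
        = (Polynomial.X ^ 2 - Polynomial.C ((4 / 3) * b1)) ^ 3 ∧
      ∃ z : ℂ, 2 ≤ (qpoly b1 b2 b3 b4 b5 b6).rootMultiplicity z := by
  have h34 : b3 * b4 = -(4 / 9) * b1 ^ 2 := by linear_combination (4 / 9) * h1
  have h43 : b4 * b3 = -(4 / 9) * b1 ^ 2 := by rw [mul_comm, h34]
  replace h2 : b2 = -(3 / 4) * b4 ^ 2 / b1 := by rw [h2]; ring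
  replace h5 : b5 = -(3 / 4) * b3 ^ 2 / b1 := by rw [h5]; ring
  have h25 : b2 * b5 = (-(4 / 9) * -(3 / 4) * b1) ^ 2 :=
    mul_eq_sq_of_mul_eq_of_eq_div hb1 h34 h2 h5
  have h544 : b5 * b4 ^ 2 = -(3 / 4) * (-(4 / 9)) ^ 2 * b1 ^ 3 :=
    mul_sq_eq_of_mul_eq_of_eq_div hb1 h34 h5
  have h233 : b2 * b3 ^ 2 = -(3 / 4) * (-(4 / 9)) ^ 2 * b1 ^ 3 :=
    mul_sq_eq_of_mul_eq_of_eq_div hb1 h43 h2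
  have hcube : qpoly b1 b2 b3 b4 b5 b6
      = (Polynomial.X ^ 2 - Polynomial.C ((4 / 3) * b1)) ^ 3 := by
    apply qpoly_eq_X_sq_sub_C_pow_three <;> rw [hb6]
    · ring
    · linear_combination -4 * h25 - 4 * h34
    · linear_combination 8 * b1 * h34 - 4 * h544 - 4 * h233
  have hdeg : 0 < (Polynomial.X ^ 2 - Polynomial.C ((4 / 3) * b1)).degree :=
    Polynomial.degree_X_pow_sub_C two_pos ((4 / 3) * b1) ▸ Nat.cast_pos.2 two_pos
  obtain ⟨z, hz⟩ := exists_le_rootMultiplicity_pow hdeg 3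
  exact ⟨hcube, z, hcube ▸ Nat.le_of_succ_le hz⟩
end
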